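/- A channel Λ on the bipartite system A × B is A↛B semicausal if and only if it is semilocalizable with communication from B to A: there exist a finite nonempty ancilla type C, a unit vector |0_C⟩ ∈ ℂ^C, a unitary U_{BC} acting on the B and C tensor factors, and a unitary U_{AC} acting on the A and C tensor factors, such that for every matrix ρ on A × B, Λ[ρ] = Tr_C[ U_{AC} U_{BC} (ρ ⊗ |0_C⟩⟨0_C|) U_{BC}† U_{AC}† ]. -/

import Mathlib

open Matrix BigOperators
open scoped Kronecker ComplexOrder

noncomputable section

/-- Partial trace over the `A` factor. -/
def trA {A B : Type*} [Fintype A] (ρ : Matrix (A × B) (A × B) ℂ) : Matrix B B ℂ :=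
  Matrix.of fun b b' => ∑ a, ρ (a, b) (a, b')

/-- Partial trace over the `B` factor. -/
def trB {A B : Type*} [Fintype B] (ρ : Matrix (A × B) (A × B) ℂ) : Matrix A A ℂ :=
  Matrix.of fun a a' => ∑ b, ρ (a, b) (a', b)

/-- A state: positive semidefinite matrix of trace 1. -/
def IsState {n : Type*} [Fintype n] (ρ : Matrix n n ℂ) : Prop :=
  ρ.PosSemidef ∧ ρ.trace = 1

/-- A channel: a map admitting a Kraus representation `Λ[X] = ∑ i, K i * X * (K i)ᴴ`
with `∑ i, (K i)ᴴ * K i = 1` (completely positive and trace-preserving). -/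
def IsChannel {n : Type*} [Fintype n] [DecidableEq n]
    (Λ : Matrix n n ℂ → Matrix n n ℂ) : Prop :=
  ∃ (m : ℕ) (K : Fin m → Matrix n n ℂ),
    (∀ X, Λ X = ∑ i, K i * X * (K i)ᴴ) ∧ (∑ i, (K i)ᴴ * K i = 1)

/-- The induced map `Γ ⊗ id` on the bipartite system, acting blockwise. -/
def tensIdA {A B : Type*} (Γ : Matrix A A ℂ → Matrix A A ℂ)
    (ρ : Matrix (A × B) (A × B) ℂ) : Matrix (A × B) (A × B) ℂ :=
  Matrix.of fun p q => Γ (Matrix.of fun a a' => ρ (a, p.2) (a', q.2)) p.1 q.1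

/-- The induced map `id ⊗ Γ` on the bipartite system, acting blockwise. -/
def tensIdB {A B : Type*} (Γ : Matrix B B ℂ → Matrix B B ℂ)
    (ρ : Matrix (A × B) (A × B) ℂ) : Matrix (A × B) (A × B) ℂ :=
  Matrix.of fun p q => Γ (Matrix.of fun b b' => ρ (p.1, b) (q.1, b')) p.2 q.2

/-- `Λ` is A↛B semicausal: no channel applied by Alice beforehand affects Bob's
reduced output state. -/
def SemicausalAtoB {A B : Type*} [Fintype A] [Fintype B] [DecidableEq A]
    (Λ : Matrix (A × B) (A × B) ℂ → Matrix (A × B) (A × B) ℂ) : Prop :=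
  ∀ ρ : Matrix (A × B) (A × B) ℂ, IsState ρ →
    ∀ Γ : Matrix A A ℂ → Matrix A A ℂ, IsChannel Γ →
      trA (Λ (tensIdA Γ ρ)) = trA (Λ ρ)

/-- `Λ` is A↚B semicausal: no channel applied by Bob beforehand affects Alice's
reduced output state. -/
def SemicausalBtoA {A B : Type*} [Fintype A] [Fintype B] [DecidableEq B]
    (Λ : Matrix (A × B) (A × B) ℂ → Matrix (A × B) (A × B) ℂ) : Prop :=
  ∀ ρ : Matrix (A × B) (A × B) ℂ, IsState ρ →
    ∀ Γ : Matrix B B ℂ → Matrix B B ℂ, IsChannel Γ →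
      trB (Λ (tensIdB Γ ρ)) = trB (Λ ρ)

/-- `Λ` is causal: both A↛B and A↚B semicausal. -/
def Causal {A B : Type*} [Fintype A] [Fintype B] [DecidableEq A] [DecidableEq B]
    (Λ : Matrix (A × B) (A × B) ℂ → Matrix (A × B) (A × B) ℂ) : Prop :=
  SemicausalAtoB Λ ∧ SemicausalBtoA Λ

/-- A unitary on the `B` and `C` factors, tensored with the identity on `A`. -/
def liftBC {A B : Type*} {c : ℕ} [DecidableEq A]
    (W : Matrix (B × Fin c) (B × Fin c) ℂ) :
    Matrix ((A × B) × Fin c) ((A × B) × Fin c) ℂ :=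
  Matrix.of fun p q =>
    (if p.1.1 = q.1.1 then (1 : ℂ) else 0) * W (p.1.2, p.2) (q.1.2, q.2)

/-- A unitary on the `A` and `C` factors, tensored with the identity on `B`. -/
def liftAC {A B : Type*} {c : ℕ} [DecidableEq B]
    (V : Matrix (A × Fin c) (A × Fin c) ℂ) :
    Matrix ((A × B) × Fin c) ((A × B) × Fin c) ℂ :=
  Matrix.of fun p q =>
    (if p.1.2 = q.1.2 then (1 : ℂ) else 0) * V (p.1.1, p.2) (q.1.1, q.2)

/-- Partial trace over the ancilla `C = Fin c`. -/
def trAncilla {n : Type*} {c : ℕ} (ρ : Matrix (n × Fin c) (n × Fin c) ℂ) :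
    Matrix n n ℂ :=
  Matrix.of fun i j => ∑ k, ρ (i, k) (j, k)

/-- Adjoining the pure ancilla state `|v⟩⟨v|` on `C = Fin c`: `ρ ⊗ |v⟩⟨v|`. -/
def withAncilla {n : Type*} {c : ℕ} (ρ : Matrix n n ℂ) (v : Fin c → ℂ) :
    Matrix (n × Fin c) (n × Fin c) ℂ :=
  Matrix.of fun p q => ρ p.1 q.1 * (v p.2 * star (v q.2))


lemma exists_unitary_of_gram {n k : Type*} [Fintype n] [DecidableEq n] [Fintype k] [DecidableEq k]
    (M N : Matrix n k ℂ) (h : Mᴴ * M = Nᴴ * N) :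
    ∃ V ∈ Matrix.unitaryGroup n ℂ, M = V * N := by
  let m : EuclideanSpace ℂ k →ₗ[ℂ] EuclideanSpace ℂ n := Matrix.toEuclideanLin M
  let g : EuclideanSpace ℂ k →ₗ[ℂ] EuclideanSpace ℂ n := Matrix.toEuclideanLin N
  have key : ∀ (X : Matrix n k ℂ) (x : EuclideanSpace ℂ k),
      inner ℂ (Matrix.toEuclideanLin X x) (Matrix.toEuclideanLin X x)
        = star (x.ofLp) ⬝ᵥ ((Xᴴ * X) *ᵥ x.ofLp) := by
    intro X x
    rw [EuclideanSpace.inner_eq_star_dotProduct]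
    simp only [Matrix.toLpLin_apply]
    rw [dotProduct_comm, Matrix.star_mulVec, ← Matrix.dotProduct_mulVec, Matrix.mulVec_mulVec]
  have hn : ∀ x, ‖m x‖ = ‖g x‖ := by
    intro x
    have h1 : inner ℂ (m x) (m x) = inner ℂ (g x) (g x) := by
      rw [key, key, h]
    rw [@norm_eq_sqrt_re_inner ℂ, @norm_eq_sqrt_re_inner ℂ _ _ _ _ (g x), h1]
  obtain ⟨s, hs⟩ := LinearMap.exists_rightInverse_of_surjective g.rangeRestrict
    (LinearMap.range_rangeRestrict g)
  have hs' : ∀ y : LinearMap.range g, g (s y) = y := by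
    intro y
    have := congrArg (fun f => ((f y : LinearMap.range g) : EuclideanSpace ℂ n)) hs
    simpa using this
  let L : LinearMap.range g →ₗᵢ[ℂ] EuclideanSpace ℂ n :=
    { toLinearMap := m ∘ₗ s
      norm_map' := by
        intro y
        simp only [LinearMap.comp_apply]
        rw [hn, hs']
        rfl }
  have hL : ∀ x, L.extend (g x) = m x := by
    intro x
    have h1 := L.extend_apply ⟨g x, LinearMap.mem_range_self g x⟩
    simp only at h1
    rw [h1]
    change m (s _) = m x
    rw [← sub_eq_zero, ← map_sub, ← norm_eq_zero, hn, map_sub, hs', sub_self, norm_zero]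
  refine ⟨Matrix.toEuclideanLin.symm L.extend.toLinearMap, ?_, ?_⟩
  · rw [Matrix.mem_unitaryGroup_iff']
    apply Matrix.toEuclideanLin.injective
    apply LinearMap.ext
    intro x
    apply ext_inner_left ℂ
    intro y
    have h2 := L.extend.inner_map_map y x
    set U : Matrix n n ℂ := Matrix.toEuclideanLin.symm L.extend.toLinearMap with hU
    have h3 : ∀ z, L.extend z = Matrix.toEuclideanLin U z := by
      intro z; rw [hU, LinearEquiv.apply_symm_apply]; rfl
    rw [h3, h3] at h2
    have h4 : Matrix.toEuclideanLin (1 : Matrix n n ℂ) x = x := by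
      simp
    rw [h4, ← h2]
    rw [EuclideanSpace.inner_eq_star_dotProduct, EuclideanSpace.inner_eq_star_dotProduct]
    simp only [Matrix.toLpLin_apply]
    rw [dotProduct_comm, dotProduct_comm (U *ᵥ x.ofLp), Matrix.star_mulVec,
      ← Matrix.dotProduct_mulVec, Matrix.mulVec_mulVec, Matrix.star_eq_conjTranspose]
  · apply Matrix.toEuclideanLin.injective
    apply LinearMap.ext
    intro x
    set U : Matrix n n ℂ := Matrix.toEuclideanLin.symm L.extend.toLinearMap with hU
    have h3 : ∀ z, L.extend z = Matrix.toEuclideanLin U z := by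
      intro z; rw [hU, LinearEquiv.apply_symm_apply]; rfl
    change m x = _
    rw [← hL, h3]
    simp only [g, Matrix.toLpLin_apply, Matrix.mulVec_mulVec]

lemma eq_of_states {n : Type*} {E : Type*} [Fintype n] [DecidableEq n] [AddCommGroup E] [Module ℂ E]
    (f g : Matrix n n ℂ →ₗ[ℂ] E)
    (h : ∀ ρ, IsState ρ → f ρ = g ρ) : f = g := by
  have h1 : ∀ ρ : Matrix n n ℂ, ρ.PosSemidef → f ρ = g ρ := by
    intro ρ hρ
    by_cases h0 : ρ.trace = 0
    · rw [hρ.trace_eq_zero_iff.mp h0]; simp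
    · have ht : 0 ≤ ρ.trace := hρ.trace_nonneg
      have h2 := h ((ρ.trace)⁻¹ • ρ) ⟨hρ.smul (by simpa using ht), by
        rw [Matrix.trace_smul, smul_eq_mul, inv_mul_cancel₀ h0]⟩
      rw [map_smul, map_smul] at h2
      exact smul_right_injective E (inv_ne_zero h0) h2
  apply Matrix.ext_linearMap
  intro p q
  apply LinearMap.ext_ring
  have hv : ∀ v : n → ℂ, f (Matrix.vecMulVec v (star v)) = g (Matrix.vecMulVec v (star v)) :=
    fun v => h1 _ (Matrix.posSemidef_vecMulVec_self_star v)
  let φ : n → ℂ := Pi.single p 1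
  let ψ : n → ℂ := Pi.single q 1
  have hdec : (4:ℂ) • Matrix.single p q (1:ℂ) =
      Matrix.vecMulVec (φ + ψ) (star (φ + ψ)) - Matrix.vecMulVec (φ - ψ) (star (φ - ψ))
      + Complex.I • Matrix.vecMulVec (φ + Complex.I • ψ) (star (φ + Complex.I • ψ))
      - Complex.I • Matrix.vecMulVec (φ - Complex.I • ψ) (star (φ - Complex.I • ψ)) := by
    have hs : Matrix.single p q (1:ℂ) = Matrix.vecMulVec φ (star ψ) := by
      ext i j
      simp [φ, ψ, Matrix.vecMulVec_apply, Matrix.single_apply, Pi.single_apply, eq_comm, ite_and]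
      split_ifs <;> simp_all
    rw [hs]
    ext i j
    simp only [Matrix.smul_apply, Matrix.sub_apply, Matrix.add_apply, Matrix.vecMulVec_apply,
      Pi.star_apply, Pi.add_apply, Pi.sub_apply, Pi.smul_apply, smul_eq_mul, star_add, star_sub,
      star_mul']
    have hI : star Complex.I = -Complex.I := by simp
    rw [hI]
    linear_combination (2 * φ i * star (ψ j) - 2 * ψ i * star (φ j)) * Complex.I_mul_I
  have h4 : (4:ℂ) • f (Matrix.single p q (1:ℂ)) = (4:ℂ) • g (Matrix.single p q (1:ℂ)) := by
    rw [← map_smul, ← map_smul, hdec]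
    simp only [map_sub, map_add, map_smul, hv]
  exact smul_right_injective E (by norm_num : (4:ℂ) ≠ 0) h4

/-- Isometry adjoining the ancilla vector. -/
def ancJ (n : Type*) [DecidableEq n] {c : ℕ} (v : Fin c → ℂ) : Matrix (n × Fin c) n ℂ :=
  Matrix.of fun p q => if p.1 = q then v p.2 else 0

lemma withAncilla_eq {n : Type*} [Fintype n] [DecidableEq n] {c : ℕ} (ρ : Matrix n n ℂ)
    (v : Fin c → ℂ) : withAncilla ρ v = ancJ n v * ρ * (ancJ n v)ᴴ := by
  ext ⟨p, k⟩ ⟨q, l⟩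
  simp only [withAncilla, ancJ, Matrix.mul_apply, Matrix.of_apply, Matrix.conjTranspose_apply,
    apply_ite star, star_zero, ite_mul, zero_mul, mul_ite, mul_zero, Finset.sum_ite_eq,
    Finset.mem_univ, if_true]
  ring

lemma trAncilla_sandwich {n : Type*} [Fintype n] {c : ℕ}
    (S : Matrix (n × Fin c) n ℂ) (ρ : Matrix n n ℂ) :
    trAncilla (S * ρ * Sᴴ) =
      ∑ k, (Matrix.of fun p q => S (p, k) q) * ρ * (Matrix.of fun p q => S (p, k) q)ᴴ := by
  ext i j
  simp [trAncilla, Matrix.mul_apply, Matrix.sum_apply]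

lemma liftBC_ancJ {A B : Type*} [Fintype A] [Fintype B] [DecidableEq A] [DecidableEq B] {c : ℕ}
    (W : Matrix (B × Fin c) (B × Fin c) ℂ) (v : Fin c → ℂ) (a a' : A) (b b' : B) (k : Fin c) :
    (liftBC (A := A) W * ancJ (A × B) v : Matrix ((A × B) × Fin c) (A × B) ℂ) ((a, b), k) (a', b') =
      if a = a' then (W * ancJ B v) (b, k) b' else 0 := by
  simp only [liftBC, ancJ, Matrix.mul_apply, Matrix.of_apply, Fintype.sum_prod_type, Prod.mk.injEq,
    ite_and, mul_ite, mul_zero, ite_mul, one_mul, zero_mul]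
  rw [Finset.sum_eq_single a']
  · simp only [if_true]
    split_ifs <;> simp
  · intro x _ hx; simp [hx]
  · simp

lemma trA_liftAC {A B : Type*} [Fintype A] [Fintype B] [DecidableEq A] [DecidableEq B] {c : ℕ}
    (V : Matrix (A × Fin c) (A × Fin c) ℂ) (hV : V ∈ Matrix.unitaryGroup (A × Fin c) ℂ)
    (X : Matrix ((A × B) × Fin c) ((A × B) × Fin c) ℂ) :
    trA (trAncilla (liftAC (B := B) V * X * (liftAC (B := B) V)ᴴ)) = trA (trAncilla X) := by
  ext b b'
  let Y : Matrix (A × Fin c) (A × Fin c) ℂ := Matrix.of fun p q => X ((p.1, b), p.2) ((q.1, b'), q.2)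
  have h1 : ∀ p : A × Fin c, (liftAC (B := B) V * X * (liftAC (B := B) V)ᴴ) ((p.1, b), p.2) ((p.1, b'), p.2)
      = (V * Y * Vᴴ) p p := by
    rintro ⟨a, k⟩
    simp [liftAC, Y, Matrix.mul_apply, Fintype.sum_prod_type, ite_and, apply_ite star]
  have h2 : (V * Y * Vᴴ).trace = Y.trace := by
    rw [Matrix.trace_mul_comm, ← Matrix.mul_assoc, ← Matrix.star_eq_conjTranspose,
      (Matrix.mem_unitaryGroup_iff').mp hV, Matrix.one_mul]
  simp only [trA, trAncilla, Matrix.of_apply]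
  rw [← Fintype.sum_prod_type', ← Fintype.sum_prod_type']
  simp only [h1]
  exact h2

lemma trA_liftBC {A B : Type*} [Fintype A] [Fintype B] [DecidableEq A] [DecidableEq B] {c : ℕ}
    (W : Matrix (B × Fin c) (B × Fin c) ℂ) (v : Fin c → ℂ) (ρ : Matrix (A × B) (A × B) ℂ) :
    trA (trAncilla (liftBC (A := A) W * withAncilla ρ v * (liftBC W)ᴴ)) =
      trAncilla ((W * ancJ B v) * trA ρ * (W * ancJ B v)ᴴ) := by
  have h : liftBC (A := A) W * withAncilla ρ v * (liftBC (A := A) W)ᴴ =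
      (liftBC (A := A) W * ancJ (A × B) v) * ρ * (liftBC (A := A) W * ancJ (A × B) v)ᴴ := by
    rw [withAncilla_eq, Matrix.conjTranspose_mul]; simp only [Matrix.mul_assoc]
  rw [h]
  ext b b'
  simp only [trA, trAncilla, Matrix.of_apply]
  rw [Finset.sum_comm]
  refine Finset.sum_congr rfl fun k _ => ?_
  generalize hT : W * ancJ B v = T
  simp only [Matrix.mul_apply (M := _ * _) (N := _ᴴ), Matrix.mul_apply (N := ρ),
    Matrix.mul_apply (M := T), Matrix.conjTranspose_apply,
    Fintype.sum_prod_type, liftBC_ancJ, hT, Matrix.of_apply]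
  simp only [ite_mul, zero_mul, apply_ite star, star_zero, mul_ite, mul_zero]
  have e1 : ∀ (a a1: A) (b1 : B), (∑ a2, ∑ b2, if a = a2 then T (b, k) b2 * ρ (a2, b2) (a1, b1) else 0)
     = ∑ b2, T (b,k) b2 * ρ (a, b2) (a1, b1) := by
    intro a a1 b1
    rw [Finset.sum_comm]; simp
  simp only [e1]
  have e2 : ∀ a : A, (∑ a1, ∑ b1, if a = a1 then (∑ b2, T (b,k) b2 * ρ (a, b2) (a1, b1)) * star (T (b', k) b1) else 0)
     = ∑ b1, (∑ b2, T (b,k) b2 * ρ (a, b2) (a, b1)) * star (T (b', k) b1) := by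
    intro a
    rw [Finset.sum_comm]; simp
  simp only [e2]
  rw [Finset.sum_comm]
  refine Finset.sum_congr rfl fun b1 _ => ?_
  rw [← Finset.sum_mul]
  congr 1
  rw [Finset.sum_comm]
  simp only [Finset.mul_sum]

lemma trA_tensIdA {A B : Type*} [Fintype A] [Fintype B] [DecidableEq A] [DecidableEq B]
    (Γ : Matrix A A ℂ → Matrix A A ℂ) (hΓ : IsChannel Γ) (ρ : Matrix (A × B) (A × B) ℂ) :
    trA (tensIdA Γ ρ) = trA ρ := by
  obtain ⟨m, K, hK, h1⟩ := hΓ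
  have htr : ∀ X, (Γ X).trace = X.trace := by
    intro X
    rw [hK, Matrix.trace_sum]
    have : ∀ i, (K i * X * (K i)ᴴ).trace = ((K i)ᴴ * K i * X).trace := by
      intro i
      rw [Matrix.trace_mul_comm, Matrix.mul_assoc]
    simp only [this]
    rw [← Matrix.trace_sum, ← Finset.sum_mul, h1, Matrix.one_mul]
  ext b b'
  exact htr (Matrix.of fun a a' => ρ (a, b) (a', b'))

/-- The replacement channel. -/
def repl {A : Type*} [Fintype A] [DecidableEq A] (a0 : A) (X : Matrix A A ℂ) : Matrix A A ℂ :=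
  Matrix.single a0 a0 X.trace

lemma repl_isChannel {A : Type*} [Fintype A] [DecidableEq A] (a0 : A) :
    IsChannel (repl a0) := by
  let e := Fintype.equivFin A
  refine ⟨Fintype.card A, fun i => Matrix.single a0 (e.symm i) 1, ?_, ?_⟩
  · intro X
    rw [Equiv.sum_comp e.symm (fun a => Matrix.single a0 a (1:ℂ) * X * (Matrix.single a0 a (1:ℂ))ᴴ)]
    simp only [Matrix.conjTranspose_single, star_one, Matrix.single_mul_mul_single, one_mul, mul_one]
    ext i j
    simp only [repl, Matrix.sum_apply, Matrix.single_apply, Matrix.trace, Matrix.diag]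
    split_ifs <;> simp
  · rw [Equiv.sum_comp e.symm (fun a => (Matrix.single a0 a (1:ℂ))ᴴ * Matrix.single a0 a (1:ℂ))]
    simp only [Matrix.conjTranspose_single, star_one, Matrix.single_mul_single_same, one_mul]
    ext i j
    simp [Matrix.sum_apply, Matrix.single_apply, Matrix.one_apply, ite_and]

lemma tensIdA_repl_single {A B : Type*} [Fintype A] [Fintype B] [DecidableEq A] [DecidableEq B]
    (a0 : A) (p q : A × B) :
    tensIdA (repl a0) (Matrix.single p q (1:ℂ)) =
      if p.1 = q.1 then Matrix.single (a0, p.2) (a0, q.2) 1 else 0 := by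
  ext ⟨a, b⟩ ⟨a', b'⟩
  obtain ⟨p1, p2⟩ := p
  obtain ⟨q1, q2⟩ := q
  simp only [tensIdA, repl, Matrix.of_apply, Matrix.single_apply, Matrix.trace, Matrix.diag,
    Prod.mk.injEq]
  by_cases h1 : a0 = a ∧ a0 = a'
  · obtain ⟨rfl, rfl⟩ := h1
    by_cases h2 : p1 = q1
    · subst h2
      simp [Matrix.single_apply, ite_and]
    · have h3 : ¬ q1 = p1 := fun h => h2 h.symm
      simp [h2, h3, ite_and]
  · rw [if_neg h1]
    split_ifs with h2
    · rw [Matrix.single_apply, if_neg]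
      rintro ⟨h3, h4⟩
      simp only [Prod.mk.injEq] at h3 h4
      exact h1 ⟨h3.1, h4.1⟩
    · rfl

lemma semicausal_gram {A B : Type*} [Fintype A] [Fintype B] [DecidableEq A] [DecidableEq B]
    (Λ : Matrix (A × B) (A × B) ℂ → Matrix (A × B) (A × B) ℂ)
    {m : ℕ} (K : Fin m → Matrix (A × B) (A × B) ℂ)
    (hK : ∀ X, Λ X = ∑ i, K i * X * (K i)ᴴ) (hs : SemicausalAtoB Λ) (a0 : A)
    (b b' : B) (p p' : A × B) :
    ∑ i, ∑ a, K i (a, b) p * star (K i (a, b') p') =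
      if p.1 = p'.1 then ∑ i, ∑ a, K i (a, b) (a0, p.2) * star (K i (a, b') (a0, p'.2)) else 0 := by
  have hΛs : ∀ p p', trA (Λ (Matrix.single p p' 1)) b b' =
      ∑ i, ∑ a, K i (a, b) p * star (K i (a, b') p') := by
    intro p p'
    rw [hK, Finset.sum_comm]
    simp only [trA, Matrix.of_apply, Matrix.sum_apply]
    refine Finset.sum_congr rfl fun a _ => Finset.sum_congr rfl fun i _ => ?_
    rw [Matrix.mul_apply, Finset.sum_eq_single p']
    · simp
    · intro x _ hx
      rw [Matrix.mul_single_apply_of_ne]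
      · simp
      · exact hx
    · simp
  let f : Matrix (A × B) (A × B) ℂ →ₗ[ℂ] ℂ :=
    { toFun := fun ρ => trA (Λ (tensIdA (repl a0) ρ)) b b'
      map_add' := by
        intro x y
        have : tensIdA (repl a0) (x + y) = tensIdA (repl a0) x + tensIdA (repl a0) y := by
          ext i j
          simp [tensIdA, repl, Matrix.trace, Matrix.single_apply, Finset.sum_add_distrib]
          split_ifs <;> simp
        rw [this, hK, hK, hK]
        simp [trA, Matrix.mul_add, Matrix.add_mul, Finset.sum_add_distrib]
      map_smul' := by
        intro r x
        have : tensIdA (repl a0) (r • x) = r • tensIdA (repl a0) x := by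
          ext i j
          simp [tensIdA, repl, Matrix.trace, Matrix.single_apply, Finset.mul_sum]
        rw [this, hK, hK]
        simp [trA, ← Finset.smul_sum, Finset.mul_sum] }
  let g : Matrix (A × B) (A × B) ℂ →ₗ[ℂ] ℂ :=
    { toFun := fun ρ => trA (Λ ρ) b b'
      map_add' := by
        intro x y
        rw [hK, hK, hK]
        simp [trA, Matrix.mul_add, Matrix.add_mul, Finset.sum_add_distrib]
      map_smul' := by
        intro r x
        rw [hK, hK]
        simp [trA, ← Finset.smul_sum, Finset.mul_sum] }
  have hfg : f = g := eq_of_states f g fun ρ hρ =>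
    congrFun (congrFun (hs ρ hρ _ (repl_isChannel a0)) b) b'
  have h1 : trA (Λ (tensIdA (repl a0) (Matrix.single p p' 1))) b b' =
    trA (Λ (Matrix.single p p' 1)) b b' := LinearMap.congr_fun hfg _
  rw [← hΛs, ← h1, tensIdA_repl_single]
  split_ifs with h
  · rw [hΛs]
  · rw [hK]; simp [trA]

lemma sum_equiv_aux {A : Type*} [Fintype A] {m c : ℕ} (e : Fin c ≃ Fin m × A)
    (F : Fin m → A → ℂ) : ∑ k, F (e k).1 (e k).2 = ∑ i, ∑ a, F i a := by
  rw [Equiv.sum_comp e (fun x => F x.1 x.2), Fintype.sum_prod_type]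

/-- a channel is A↛B semicausal iff it is semilocalizable with
communication from B to A:
`Λ[ρ] = Tr_C[ U_AC U_BC (ρ ⊗ |0_C⟩⟨0_C|) U_BC† U_AC† ]` for some finite nonempty
ancilla `C`, unit vector `|0_C⟩`, and unitaries `U_BC`, `U_AC` acting on the indicated
factors. -/
theorem stmt_10 {A B : Type*} [Fintype A] [Fintype B] [DecidableEq A] [DecidableEq B]
    [Nonempty A] [Nonempty B]
    (Λ : Matrix (A × B) (A × B) ℂ → Matrix (A × B) (A × B) ℂ) (hΛ : IsChannel Λ) :
    SemicausalAtoB Λ ↔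
      ∃ c : ℕ, 0 < c ∧
        ∃ v : Fin c → ℂ, (∑ k, star (v k) * v k = 1) ∧
          ∃ W ∈ Matrix.unitaryGroup (B × Fin c) ℂ,
            ∃ V ∈ Matrix.unitaryGroup (A × Fin c) ℂ,
              ∀ ρ : Matrix (A × B) (A × B) ℂ,
                Λ ρ = trAncilla
                  (liftAC V * liftBC W * withAncilla ρ v
                    * (liftBC W)ᴴ * (liftAC V)ᴴ) := by
  constructor
  · intro hs
    obtain ⟨m, K, hK, hK1⟩ := hΛ
    obtain ⟨a0⟩ := ‹Nonempty A›
    obtain ⟨b0⟩ := ‹Nonempty B›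
    have hm : 0 < m := by
      rcases Nat.eq_zero_or_pos m with rfl | h
      · have := congrFun (congrFun hK1 (a0, b0)) (a0, b0)
        simp at this
      · exact h
    let c := Fintype.card (Fin m × A)
    let e : Fin c ≃ Fin m × A := (Fintype.equivFin (Fin m × A)).symm
    have hc : 0 < c := Fintype.card_pos_iff.mpr ⟨(⟨0, hm⟩, a0)⟩
    let v : Fin c → ℂ := Pi.single ⟨0, hc⟩ 1
    have hv : ∑ k, star (v k) * v k = 1 := by
      simp [v, Pi.single_apply]
    let T : Matrix (B × Fin c) B ℂ := Matrix.of fun p b' => K (e p.2).1 ((e p.2).2, p.1) (a0, b')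
    have hT : Tᴴ * T = (ancJ B v : Matrix (B × Fin c) B ℂ)ᴴ * ancJ B v := by
      have h1 : (ancJ B v : Matrix (B × Fin c) B ℂ)ᴴ * ancJ B v = 1 := by
        ext b b'
        simp only [ancJ, Matrix.mul_apply, Matrix.conjTranspose_apply, Matrix.of_apply,
          Fintype.sum_prod_type, Matrix.one_apply]
        by_cases h : b = b'
        · subst h
          rw [Finset.sum_eq_single b]
          · simpa using hv
          · intro x _ hx; simp [hx]
          · simp
        · rw [if_neg h]
          refine Finset.sum_eq_zero fun x _ => Finset.sum_eq_zero fun k _ => ?_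
          by_cases hx : x = b
          · subst hx; simp [h]
          · simp [hx]
      rw [h1]
      ext b b'
      have h2 := congrFun (congrFun hK1 (a0, b)) (a0, b')
      simp only [Matrix.sum_apply, Matrix.mul_apply, Matrix.conjTranspose_apply,
        Fintype.sum_prod_type, Matrix.one_apply, Prod.mk.injEq, true_and] at h2
      rw [Matrix.one_apply, ← h2]
      simp only [T, Matrix.mul_apply, Matrix.conjTranspose_apply, Matrix.of_apply,
          Fintype.sum_prod_type]
      rw [Finset.sum_comm]
      exact sum_equiv_aux e (fun i a => ∑ x, star (K i (a, x) (a0, b)) * K i (a, x) (a0, b'))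
    obtain ⟨W, hW, hWT⟩ := exists_unitary_of_gram _ _ hT
    let M : Matrix (A × Fin c) (B × (A × B)) ℂ := Matrix.of fun x y =>
      if (e x.2).2 = a0 then K (e x.2).1 (x.1, y.1) y.2 else 0
    let N : Matrix (A × Fin c) (B × (A × B)) ℂ := Matrix.of fun x y =>
      if x.1 = y.2.1 then T (y.1, x.2) y.2.2 else 0
    have hMN : Mᴴ * M = Nᴴ * N := by
      ext ⟨b', p'⟩ ⟨b, p⟩
      have hg := semicausal_gram Λ K hK hs a0 b b' p p'
      have h1 : (Mᴴ * M) (b', p') (b, p) = ∑ i, ∑ a, K i (a, b) p * star (K i (a, b') p') := by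
        simp only [M, Matrix.mul_apply, Matrix.conjTranspose_apply, Matrix.of_apply,
          Fintype.sum_prod_type]
        rw [Finset.sum_comm]
        rw [sum_equiv_aux e (fun i a1 => ∑ a, star (if a1 = a0 then K i (a, b') p' else 0) *
          (if a1 = a0 then K i (a, b) p else 0))]
        refine Finset.sum_congr rfl fun i _ => ?_
        rw [Finset.sum_eq_single a0]
        · simp [mul_comm]
        · intro x _ hx; simp [hx]
        · simp
      have h2 : (Nᴴ * N) (b', p') (b, p) = if p.1 = p'.1 then
          ∑ i, ∑ a, K i (a, b) (a0, p.2) * star (K i (a, b') (a0, p'.2)) else 0 := by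
        simp only [N, T, Matrix.mul_apply, Matrix.conjTranspose_apply, Matrix.of_apply,
          Fintype.sum_prod_type]
        rw [Finset.sum_eq_single p.1]
        · by_cases h : p.1 = p'.1
          · simp only [h, if_true]
            rw [← sum_equiv_aux e]
            refine Finset.sum_congr rfl fun k _ => mul_comm _ _
          · simp [h]
        · intro x _ hx; simp [hx]
        · simp
      rw [h1, h2, hg]
    obtain ⟨V, hV, hVN⟩ := exists_unitary_of_gram _ _ hMN
    refine ⟨c, hc, v, hv, W, hW, V, hV, fun ρ => ?_⟩
    have h : liftAC (B := B) V * liftBC (A := A) W * withAncilla ρ v * (liftBC (A := A) W)ᴴ * (liftAC (B := B) V)ᴴ =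
      (liftAC (B := B) V * (liftBC (A := A) W * ancJ (A × B) v)) * ρ * (liftAC (B := B) V * (liftBC (A := A) W * ancJ (A × B) v))ᴴ := by
      rw [withAncilla_eq, Matrix.conjTranspose_mul, Matrix.conjTranspose_mul]
      simp only [Matrix.mul_assoc]
    rw [h, trAncilla_sandwich]
    have hS : ∀ k, (Matrix.of fun p q =>
        (liftAC (B := B) V * (liftBC (A := A) W * ancJ (A × B) v) : Matrix ((A × B) × Fin c) (A × B) ℂ) (p, k) q) =
        if (e k).2 = a0 then K (e k).1 else 0 := by
      intro k
      ext ⟨a, b⟩ ⟨a', b'⟩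
      have h3 := congrFun (congrFun hVN (a, k)) (b, (a', b'))
      have h4 : M (a, k) (b, (a', b')) = (if (e k).2 = a0 then K (e k).1 else 0) (a, b) (a', b') := by
        simp only [M, Matrix.of_apply]
        split_ifs <;> rfl
      rw [← h4, h3, Matrix.of_apply, Matrix.mul_apply, Matrix.mul_apply]
      simp only [Fintype.sum_prod_type, liftBC_ancJ, ← hWT, N, liftAC, Matrix.of_apply]
      refine Finset.sum_congr rfl fun x _ => ?_
      rw [Finset.sum_comm]
      refine Finset.sum_congr rfl fun y _ => ?_
      simp
    simp only [hS]
    have h5 : ∀ k, (if (e k).2 = a0 then K (e k).1 else 0) * ρ *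
        (if (e k).2 = a0 then K (e k).1 else 0)ᴴ =
        (fun x : Fin m × A => if x.2 = a0 then K x.1 * ρ * (K x.1)ᴴ else 0) (e k) := by
      intro k
      by_cases h : (e k).2 = a0 <;> simp [h]
    simp only [h5]
    rw [Equiv.sum_comp e (fun x : Fin m × A => if x.2 = a0 then K x.1 * ρ * (K x.1)ᴴ else 0), Fintype.sum_prod_type, hK]
    simp
  · rintro ⟨c, hc, v, hv, W, hW, V, hV, h⟩ ρ hρ Γ hΓ
    have key : ∀ ρ, trA (Λ ρ) = trAncilla ((W * ancJ B v) * trA ρ * (W * ancJ B v)ᴴ) := by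
      intro ρ
      have h1 : liftAC (B := B) V * liftBC (A := A) W * withAncilla ρ v * (liftBC (A := A) W)ᴴ * (liftAC (B := B) V)ᴴ =
        liftAC (B := B) V * (liftBC (A := A) W * withAncilla ρ v * (liftBC (A := A) W)ᴴ) * (liftAC (B := B) V)ᴴ := by
        simp only [Matrix.mul_assoc]
      rw [h, h1, trA_liftAC (B := B) V hV, trA_liftBC]
    rw [key, key, trA_tensIdA Γ hΓ]
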